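/- There exists a constant C > 0 such that for every finite field F, writing q = |F|, d = gcd(2, q−1) and G = PSL₂(F), for each sign ε ∈ {+1, −1} the number of elements y ∈ G whose order is greater than 5 and divides (q − ε)/d differs from |G|/2 by at most C·|G|/q. -/

import Mathlib

/-- The projective special linear group `PSL₂(F) = SL₂(F) / Z(SL₂(F))`. -/
abbrev PSL2 (F : Type*) [Field F] :=
  Matrix.SpecialLinearGroup (Fin 2) F ⧸
    Subgroup.center (Matrix.SpecialLinearGroup (Fin 2) F)

section
open Matrix Polynomial

abbrev SL (F : Type) [Field F] := Matrix.SpecialLinearGroup (Fin 2) F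

lemma cnt_bc (F : Type) [Field F] [Fintype F] [DecidableEq F] (k : F) :
    ((Finset.univ.filter (fun p : F × F => p.1 * p.2 = k)).card : ℤ) =
      (Fintype.card F - 1) + if k = 0 then (Fintype.card F : ℤ) else 0 := by
  rw [Finset.card_filter, Fintype.sum_prod_type]
  push_cast
  rw [← Finset.add_sum_erase _ _ (Finset.mem_univ (0:F))]
  have : ∀ b ∈ Finset.univ.erase (0:F), (∑ c : F, if b * c = k then (1:ℤ) else 0) = 1 := by
    intro b hb
    have hb : b ≠ 0 := by simpa using hb
    have : ∀ c : F, b * c = k ↔ c = b⁻¹ * k := by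
      intro c
      constructor
      · rintro rfl; field_simp
      · rintro rfl; field_simp
    simp [this]
  rw [Finset.sum_congr rfl this]
  have h1 : 1 ≤ Fintype.card F := Fintype.card_pos
  simp [Finset.card_erase_of_mem, eq_comm (a := (0:F)), Nat.cast_sub h1]
  split_ifs <;> simp [add_comm]

noncomputable def rr (F : Type) [Field F] [Fintype F] [DecidableEq F] (t : F) : ℕ :=
  (Finset.univ.filter (fun a : F => a * (t - a) - 1 = 0)).card

noncomputable def fibEquiv (F : Type) [Field F] (t : F) :
    {A : SL F // A.1.trace = t} ≃ Σ a : F, {p : F × F // p.1 * p.2 = a * (t - a) - 1} where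
  toFun A := ⟨A.1.1 0 0, ⟨(A.1.1 0 1, A.1.1 1 0), by
    have h1 := A.1.2
    have h2 := A.2
    rw [Matrix.det_fin_two] at h1
    rw [Matrix.trace_fin_two] at h2
    simp only
    linear_combination -h1 + A.1.1 0 0 * h2⟩⟩
  invFun x := ⟨⟨!![x.1, x.2.1.1; x.2.1.2, t - x.1], by
    have := x.2.2
    rw [Matrix.det_fin_two_of]; linear_combination -this⟩, by
    simp [Matrix.trace_fin_two]⟩
  left_inv A := by
    have h2 := A.2
    rw [Matrix.trace_fin_two] at h2
    apply Subtype.ext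
    apply Subtype.ext
    ext i j
    fin_cases i <;> fin_cases j <;> simp
    linear_combination -h2
  right_inv x := by
    rcases x with ⟨a, ⟨⟨b, c⟩, h⟩⟩
    simp

lemma fib_card (F : Type) [Field F] [Fintype F] [DecidableEq F] (t : F) :
    ((Nat.card {A : SL F // A.1.trace = t} : ℕ) : ℤ) =
      (Fintype.card F : ℤ)^2 - Fintype.card F + Fintype.card F * rr F t := by
  rw [Nat.card_congr (fibEquiv F t), Nat.card_sigma]
  have : ∀ a : F, ((Nat.card {p : F × F // p.1 * p.2 = a * (t - a) - 1} : ℕ) : ℤ) =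
     (Fintype.card F - 1) + if a * (t - a) - 1 = 0 then (Fintype.card F : ℤ) else 0 := by
    intro a
    rw [← cnt_bc, Nat.card_eq_fintype_card, Fintype.card_subtype]
  push_cast
  rw [Finset.sum_congr rfl (fun a _ => this a), Finset.sum_add_distrib, ← Finset.sum_filter]
  simp [rr, Finset.card_univ]
  ring

lemma sum_rr (F : Type) [Field F] [Fintype F] [DecidableEq F] :
    (∑ t : F, (rr F t : ℤ)) = Fintype.card F - 1 := by
  simp only [rr, Finset.card_filter]
  push_cast
  rw [Finset.sum_comm, ← Finset.add_sum_erase _ _ (Finset.mem_univ (0:F))]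
  have : ∀ b ∈ Finset.univ.erase (0:F), (∑ t : F, if b * (t - b) - 1 = 0 then (1:ℤ) else 0) = 1 := by
    intro b hb
    have hb : b ≠ 0 := by simpa using hb
    have : ∀ c : F, b * (c - b) - 1 = 0 ↔ c = b⁻¹ + b := by
      intro c
      constructor
      · intro h
        field_simp; linear_combination h
      · rintro rfl; field_simp; ring
    simp [this]
  rw [Finset.sum_congr rfl this]
  have h1 : 1 ≤ Fintype.card F := Fintype.card_pos
  simp [Finset.card_erase_of_mem, Nat.cast_sub h1, Finset.card_univ]

lemma pow2 {F : Type} [Field F] (A : SL F) :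
    A.1 ^ 2 = A.1.trace • A.1 - 1 := by
  have h1 := A.2
  rw [Matrix.det_fin_two] at h1
  rw [Matrix.trace_fin_two, pow_two]
  ext i j
  fin_cases i <;> fin_cases j <;> simp [Matrix.mul_apply, Fin.sum_univ_two]
  · linear_combination -h1
  · ring
  · ring
  · linear_combination -h1

lemma scalar_center {F : Type} [Field F] (B : SL F) (c : F) (h : B.1 = c • 1) :
    B ∈ Subgroup.center (SL F) := by
  rw [Subgroup.mem_center_iff]
  intro g
  apply Subtype.ext
  simp [h]

lemma center_scalar {F : Type} [Field F] (B : SL F) (h : B ∈ Subgroup.center (SL F)) :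
    ∃ c : F, B.1 = c • 1 := by
  obtain ⟨c, _, hc⟩ := Matrix.SpecialLinearGroup.mem_center_iff.1 h
  exact ⟨c, by rw [← hc]; ext i j; simp [Matrix.smul_apply, Matrix.one_apply, Matrix.diagonal_apply]⟩

lemma sq_one_center {F : Type} [Field F] (B : SL F) (h2 : (2:F) ≠ 0) (h : B ^ 2 = 1) :
    B ∈ Subgroup.center (SL F) := by
  have h1 : B.1 ^ 2 = 1 := by
    have := congrArg Subtype.val h
    simpa using this
  rw [pow2] at h1
  have h3 : B.1.trace • B.1 = (2:F) • 1 := by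
    rw [two_smul]; exact sub_eq_iff_eq_add.1 h1
  have h4 : B.1.trace ≠ 0 := by
    intro h0
    rw [h0] at h3
    have := congrFun (congrFun h3 0) 0
    simp at this
    exact h2 this.symm
  refine scalar_center B (B.1.trace⁻¹ * 2) ?_
  rw [mul_smul, ← h3, smul_smul, inv_mul_cancel₀ h4, one_smul]

noncomputable def cp {F : Type} [Field F] (t : F) : F[X] := X^2 - C t * X + 1

lemma aeval_cp {F : Type} [Field F] (A : SL F) : aeval A.1 (cp A.1.trace) = 0 := by
  simp [cp, pow2, Algebra.algebraMap_eq_smul_one]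

lemma cp_dvd {F : Type} [Field F] [Fintype F] (t : F) :
    cp t ∣ (X ^ Fintype.card F - X) * (X ^ Fintype.card F - (C t - X)) := by
  have h := FiniteField.expand_card (cp t)
  have h2 : expand F (Fintype.card F) (cp t) = X^(2 * Fintype.card F) - C t * X ^ Fintype.card F + 1 := by
    simp [cp]; ring
  rw [h2] at h
  have : (X ^ Fintype.card F - X) * (X ^ Fintype.card F - (C t - X)) = cp t ^ Fintype.card F - cp t := by
    rw [← h, cp]; ring
  rw [this]
  exact dvd_sub (dvd_pow_self _ Fintype.card_ne_zero) dvd_rfl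

lemma split_pow {F : Type} [Field F] [Fintype F] (A : SL F) (a b : F) (hab : a ≠ b)
   (ha : a * (A.1.trace - a) - 1 = 0) (hb : b * (A.1.trace - b) - 1 = 0) :
    A ^ (Fintype.card F - 1) = 1 := by
  have hs : A.1.trace = a + b := by
    have : (a - b) * (A.1.trace - (a + b)) = 0 := by linear_combination ha - hb
    rcases mul_eq_zero.1 this with h | h
    · exact absurd (sub_eq_zero.1 h) hab
    · exact sub_eq_zero.1 h
  have hp : a * b = 1 := by rw [hs] at ha; linear_combination ha
  have hc : cp A.1.trace = (X - C a) * (X - C b) := by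
    rw [cp, hs]
    have : C a * C b = (1 : F[X]) := by rw [← C_mul, hp, C_1]
    rw [C_add]; linear_combination -this
  have hd : cp A.1.trace ∣ X ^ Fintype.card F - X := by
    rw [hc]
    apply IsCoprime.mul_dvd
    · exact isCoprime_X_sub_C_of_isUnit_sub (sub_ne_zero.2 hab).isUnit
    · rw [dvd_iff_isRoot]; simp [FiniteField.pow_card]
    · rw [dvd_iff_isRoot]; simp [FiniteField.pow_card]
  obtain ⟨g, hg⟩ := hd
  have h := congrArg (aeval A.1) hg
  rw [map_mul, aeval_cp, zero_mul] at h
  have h' : A ^ Fintype.card F = A := by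
    apply Subtype.ext
    simpa [sub_eq_zero] using h
  have hq : 1 ≤ Fintype.card F := Fintype.card_pos
  apply mul_right_cancel (b := A)
  rw [← pow_succ, Nat.sub_add_cancel hq, h', one_mul]

lemma irr_pow {F : Type} [Field F] [Fintype F] (A : SL F) 
   (ha : ∀ a : F, a * (A.1.trace - a) - 1 ≠ 0) :
    A ^ (Fintype.card F + 1) = 1 := by
  have hdeg : (cp A.1.trace).natDegree = 2 := by rw [cp]; compute_degree!
  have hirr : Irreducible (cp A.1.trace) := by
    rw [Polynomial.irreducible_iff_roots_eq_zero_of_degree_le_three (by omega) (by omega)]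
    rw [Multiset.eq_zero_iff_forall_notMem]
    intro a h
    have := (mem_roots'.1 h).2
    simp [cp] at this
    exact ha a (by linear_combination -this)
  have hd : cp A.1.trace ∣ X ^ Fintype.card F - (C A.1.trace - X) := by
    rcases hirr.prime.dvd_or_dvd (cp_dvd A.1.trace) with h | h
    · exfalso
      have hsp : (X ^ Fintype.card F - X : F[X]).Splits := by
        rw [Polynomial.splits_iff_card_roots, FiniteField.roots_X_pow_card_sub_X,
          FiniteField.X_pow_card_sub_X_natDegree_eq F Fintype.one_lt_card]
        exact Finset.card_univ
      have := (hsp.of_dvd (FiniteField.X_pow_card_sub_X_ne_zero F Fintype.one_lt_card)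
        h).natDegree_eq_one_of_irreducible hirr
      omega
    · exact h
  obtain ⟨g, hg⟩ := hd
  have h := congrArg (aeval A.1) hg
  rw [map_mul, aeval_cp, zero_mul] at h
  have h' : A.1 ^ Fintype.card F = A.1.trace • 1 - A.1 := by
    simpa [sub_eq_zero, Algebra.algebraMap_eq_smul_one] using h
  apply Subtype.ext
  have : A.1 ^ (Fintype.card F + 1) = 1 := by
    rw [pow_succ, h', sub_mul, ← pow_two, pow2]; simp
  simpa using this

noncomputable def bp (F : Type) [Field F] : F[X] :=
  (X^2 - 4) * (X * ((X^2 - 1) * ((X^3 - 2 * X) * (X^4 - 3 * X^2 + 1))))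

lemma bp_ne (F : Type) [Field F] : bp F ≠ 0 := by
  have h1 : (X^2 - 4 : F[X]).Monic := by
    have : (4 : F[X]) = C 4 := rfl
    rw [this]; monicity!
  have h2 : (X^2 - 1 : F[X]).Monic := by monicity!
  have h3 : (X^3 - 2 * X : F[X]).Monic := by
    have : (2 : F[X]) = C 2 := rfl
    rw [this]; monicity!
  have h4 : (X^4 - 3 * X^2 + 1 : F[X]).Monic := by
    have : (3 : F[X]) = C 3 := rfl
    rw [this]; monicity!
  exact (h1.mul (monic_X.mul (h2.mul (h3.mul h4)))).ne_zero

open Classical in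
noncomputable def Bad (F : Type) [Field F] : Finset F := (bp F).roots.toFinset

lemma bad_card (F : Type) [Field F] : (Bad F).card ≤ 12 := by
  classical
  unfold Bad
  refine (Multiset.toFinset_card_le _).trans ((card_roots' _).trans ?_)
  rw [bp]
  have h4 : (4 : F[X]) = C 4 := rfl
  have h2 : (2 : F[X]) = C 2 := rfl
  have h3 : (3 : F[X]) = C 3 := rfl
  rw [h4, h2, h3]
  compute_degree

lemma mem_bad {F : Type} [Field F] (t : F) : t ∈ Bad F ↔
    (t^2 - 4 = 0 ∨ t = 0 ∨ t^2 - 1 = 0 ∨ t^3 - 2 * t = 0 ∨ t^4 - 3 * t^2 + 1 = 0) := by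
  have h4 : (4 : F[X]) = C 4 := rfl
  have h2 : (2 : F[X]) = C 2 := rfl
  have h3 : (3 : F[X]) = C 3 := rfl
  simp only [Bad, Multiset.mem_toFinset, mem_roots (bp_ne F), IsRoot.def]
  simp only [bp, h4, h2, h3]
  simp only [eval_mul, eval_sub, eval_add, eval_pow, eval_X, eval_C, eval_one, mul_eq_zero]

lemma lin_scalar {F : Type} [Field F] (A : SL F) (x y c : F)
    (h : x • A.1 - y • 1 = c • 1) (hx : x ≠ 0) : A.1.trace ^ 2 - 4 = 0 := by
  have h1 := A.2
  rw [Matrix.det_fin_two] at h1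
  have e01 := congrFun (congrFun h 0) 1
  have e10 := congrFun (congrFun h 1) 0
  have e00 := congrFun (congrFun h 0) 0
  have e11 := congrFun (congrFun h 1) 1
  simp [hx] at e01 e10 e00 e11
  have e : A.1 0 0 = A.1 1 1 := by
    apply mul_left_cancel₀ hx
    linear_combination e00 - e11
  rw [e01, e] at h1
  rw [Matrix.trace_fin_two, e]
  linear_combination 4 * h1

lemma small_bad {F : Type} [Field F] (A : SL F) (m : ℕ) (hm : 1 ≤ m) (hm5 : m ≤ 5)
    (h : A ^ m ∈ Subgroup.center (SL F)) : A.1.trace ∈ Bad F := by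
  obtain ⟨c, hc⟩ := center_scalar _ h
  rw [Matrix.SpecialLinearGroup.coe_pow] at hc
  rw [mem_bad]
  set t := A.1.trace with ht
  have p2 : A.1 ^ 2 = t • A.1 - (1:F) • 1 := by rw [pow2, one_smul]
  have p3 : A.1 ^ 3 = (t^2 - 1) • A.1 - t • 1 := by
    rw [pow_succ, p2, sub_mul, smul_mul_assoc, ← pow_two, p2, smul_mul_assoc, one_mul]; module
  have p4 : A.1 ^ 4 = (t^3 - 2 * t) • A.1 - (t^2 - 1) • 1 := by
    rw [pow_succ, p3, sub_mul, smul_mul_assoc, ← pow_two, p2, smul_mul_assoc, one_mul]; module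
  have p5 : A.1 ^ 5 = (t^4 - 3 * t^2 + 1) • A.1 - (t^3 - 2 * t) • 1 := by
    rw [pow_succ, p4, sub_mul, smul_mul_assoc, ← pow_two, p2, smul_mul_assoc, one_mul]; module
  by_contra! hne
  obtain ⟨n0, n1, n2, n3, n4⟩ := hne
  interval_cases m
  · exact n0 (lin_scalar A 1 0 c (by rw [← hc]; simp) one_ne_zero)
  · exact n0 (lin_scalar A _ _ c (p2 ▸ hc) n1)
  · exact n0 (lin_scalar A _ _ c (p3 ▸ hc) n2)
  · exact n0 (lin_scalar A _ _ c (p4 ▸ hc) n3)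
  · exact n0 (lin_scalar A _ _ c (p5 ▸ hc) n4)

lemma rr_sub (F : Type) [Field F] [Fintype F] [DecidableEq F] (t a : F)
    (ha : a * (t - a) - 1 = 0) :
    (Finset.univ.filter (fun a : F => a * (t - a) - 1 = 0)) = {a, t - a} := by
  ext b
  simp only [Finset.mem_filter, Finset.mem_univ, true_and, Finset.mem_insert,
    Finset.mem_singleton]
  constructor
  · intro hb
    have : (a - b) * (t - (a + b)) = 0 := by linear_combination ha - hb
    rcases mul_eq_zero.1 this with h | h
    · left; linear_combination -h
    · right; linear_combination -h
  · rintro (rfl | rfl)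
    · exact ha
    · linear_combination ha

lemma rr_zero (F : Type) [Field F] [Fintype F] [DecidableEq F] (t : F) :
    rr F t = 0 ↔ ∀ a : F, a * (t - a) - 1 ≠ 0 := by
  simp [rr, Finset.filter_eq_empty_iff]

lemma rr_le (F : Type) [Field F] [Fintype F] [DecidableEq F] (t : F) : rr F t ≤ 2 := by
  by_cases h : rr F t = 0
  · omega
  rw [rr_zero] at h
  push Not at h
  obtain ⟨a, ha⟩ := h
  rw [rr, rr_sub F t a ha]
  exact Finset.card_le_two

lemma rr_two (F : Type) [Field F] [Fintype F] [DecidableEq F] (t : F) (h : rr F t = 2) :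
    ∃ a b : F, a ≠ b ∧ a * (t - a) - 1 = 0 ∧ b * (t - b) - 1 = 0 := by
  have h0 : ¬ rr F t = 0 := by omega
  rw [rr_zero] at h0
  push Not at h0
  obtain ⟨a, ha⟩ := h0
  refine ⟨a, t - a, ?_, ha, by linear_combination ha⟩
  intro h1
  rw [rr, rr_sub F t a ha, ← h1] at h
  simp at h

lemma rr_one (F : Type) [Field F] [Fintype F] [DecidableEq F] (t : F) (h : rr F t = 1) :
    t ∈ Bad F := by
  rw [mem_bad]
  left
  have h0 : ¬ rr F t = 0 := by omega
  rw [rr_zero] at h0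
  push Not at h0
  obtain ⟨a, ha⟩ := h0
  have : a = t - a := by
    by_contra hne
    rw [rr, rr_sub F t a ha, Finset.card_pair hne] at h
    omega
  have h2 : t = 2 * a := by linear_combination -this
  rw [h2] at ha ⊢
  linear_combination 4 * ha

lemma ord_iff {F : Type} [Field F] (A : SL F) (n : ℕ) :
    orderOf (QuotientGroup.mk A : PSL2 F) ∣ n ↔ A ^ n ∈ Subgroup.center (SL F) := by
  rw [orderOf_dvd_iff_pow_eq_one, ← QuotientGroup.mk_pow, QuotientGroup.eq_one_iff]

lemma ord_big {F : Type} [Field F] [Fintype F] (A : SL F) (h : A.1.trace ∉ Bad F) :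
    5 < orderOf (QuotientGroup.mk A : PSL2 F) := by
  classical
  by_contra! hle
  exact h (small_bad A _ (orderOf_pos _) hle ((ord_iff A _).1 dvd_rfl))

lemma half_center {F : Type} [Field F] [Fintype F] (A : SL F) (n : ℕ) (h : A ^ n = 1)
    (hn : Nat.gcd 2 (Fintype.card F - 1) ∣ n) :
    A ^ (n / Nat.gcd 2 (Fintype.card F - 1)) ∈ Subgroup.center (SL F) := by
  have hd : Nat.gcd 2 (Fintype.card F - 1) ∣ 2 := Nat.gcd_dvd_left _ _
  rcases (Nat.dvd_prime Nat.prime_two).1 hd with h1 | h1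
  · rw [h1, Nat.div_one, h]; exact one_mem _
  · have h3 : 2 ∣ Fintype.card F - 1 := h1 ▸ Nat.gcd_dvd_right 2 (Fintype.card F - 1)
    rw [h1] at hn ⊢
    apply sq_one_center
    · have hc : 1 < Fintype.card F := Fintype.one_lt_card
      apply Ring.two_ne_zero
      rw [Ne, FiniteField.even_card_iff_char_two]
      omega
    · rw [← pow_mul, Nat.div_mul_cancel hn, h]

lemma d_dvd (q : ℕ) (hq : 1 ≤ q) : Nat.gcd 2 (q - 1) ∣ q + 1 := by
  have : q + 1 = (q - 1) + 2 := by omega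
  rw [this]
  exact dvd_add (Nat.gcd_dvd_right _ _) (Nat.gcd_dvd_left _ _)

lemma not_both (q o : ℕ) (hq : 1 ≤ q) (ho : 5 < o) (h1 : o ∣ (q - 1) / Nat.gcd 2 (q - 1))
    (h2 : o ∣ (q + 1) / Nat.gcd 2 (q - 1)) : False := by
  have a1 := h1.trans (Nat.div_dvd_of_dvd (Nat.gcd_dvd_right 2 (q - 1)))
  have a2 := h2.trans (Nat.div_dvd_of_dvd (d_dvd q hq))
  have := Nat.dvd_sub a2 a1
  have e : q + 1 - (q - 1) = 2 := by omega
  rw [e] at this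
  have := Nat.le_of_dvd (by norm_num) this
  omega

lemma plus_iff {F : Type} [Field F] [Fintype F] [DecidableEq F] (A : SL F)
    (h : A.1.trace ∉ Bad F) :
    (5 < orderOf (QuotientGroup.mk A : PSL2 F) ∧ orderOf (QuotientGroup.mk A : PSL2 F) ∣
      (Fintype.card F - 1) / Nat.gcd 2 (Fintype.card F - 1) ↔ rr F A.1.trace = 2) ∧ 
    (5 < orderOf (QuotientGroup.mk A : PSL2 F) ∧ orderOf (QuotientGroup.mk A : PSL2 F) ∣
      (Fintype.card F + 1) / Nat.gcd 2 (Fintype.card F - 1) ↔ rr F A.1.trace = 0) := by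
  have hb := ord_big A h
  have hq : 1 ≤ Fintype.card F := Fintype.card_pos
  have h2 := rr_le F A.1.trace
  have h1 : rr F A.1.trace ≠ 1 := fun e => h (rr_one F _ e)
  have hs : rr F A.1.trace = 2 → orderOf (QuotientGroup.mk A : PSL2 F) ∣
      (Fintype.card F - 1) / Nat.gcd 2 (Fintype.card F - 1) := by
    intro e
    obtain ⟨a, b, hab, ha, hb⟩ := rr_two F _ e
    rw [ord_iff]
    exact half_center A _ (split_pow A a b hab ha hb) (Nat.gcd_dvd_right _ _)
  have hi : rr F A.1.trace = 0 → orderOf (QuotientGroup.mk A : PSL2 F) ∣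
      (Fintype.card F + 1) / Nat.gcd 2 (Fintype.card F - 1) := by
    intro e
    rw [ord_iff]
    exact half_center A _ (irr_pow A ((rr_zero F _).1 e)) (d_dvd _ hq)
  have hn := not_both _ _ hq hb
  constructor
  · refine ⟨fun hh => ?_, fun e => ⟨hb, hs e⟩⟩
    by_contra hne
    exact hn hh.2 (hi (by omega))
  · refine ⟨fun hh => ?_, fun e => ⟨hb, hi e⟩⟩
    by_contra hne
    exact hn (hs (by omega)) hh.2

lemma cardT (F : Type) [Field F] [Fintype F] [DecidableEq F] (T : Finset F) :
    ((Finset.univ.filter (fun A : SL F => A.1.trace ∈ T)).card : ℤ) =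
      T.card * ((Fintype.card F : ℤ)^2 - Fintype.card F) + Fintype.card F * ∑ t ∈ T, (rr F t : ℤ) := by
  rw [Finset.card_eq_sum_card_fiberwise (f := fun A : SL F => A.1.trace) (t := T)
    (by intro A hA; simpa using hA)]
  push_cast
  have : ∀ t ∈ T, (((Finset.univ.filter (fun A : SL F => A.1.trace ∈ T)).filter
      (fun A => A.1.trace = t)).card : ℤ) = 
      (Fintype.card F : ℤ)^2 - Fintype.card F + Fintype.card F * rr F t := by
    intro t ht
    rw [← fib_card, Nat.card_eq_fintype_card, Fintype.card_subtype, Finset.filter_filter]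
    congr 2
    ext A
    simp only [Finset.mem_filter, Finset.mem_univ, true_and]
    exact ⟨fun h => h.2, fun h => ⟨h ▸ ht, h⟩⟩
  rw [Finset.sum_congr rfl this, Finset.sum_add_distrib, ← Finset.mul_sum]
  simp
  ring

lemma card_SL' (F : Type) [Field F] [Fintype F] [DecidableEq F] :
    (Fintype.card (SL F) : ℤ) = (Fintype.card F : ℤ)^3 - Fintype.card F := by
  have := cardT F Finset.univ
  rw [sum_rr] at this
  simp [Finset.card_univ] at this
  rw [this]; ring

lemma counts (F : Type) [Field F] [Fintype F] [DecidableEq F] :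
    ∃ D : ℤ, 0 ≤ D ∧ D ≤ 12 ∧
      2 * ((Finset.univ.filter (fun t : F => rr F t = 2)).card : ℤ) = Fintype.card F - 1 - D ∧
      2 * ((Finset.univ.filter (fun t : F => rr F t = 0)).card : ℤ) = Fintype.card F + 1 - D := by
  have hD : (Finset.univ.filter (fun t : F => rr F t = 1)).card ≤ 12 :=
    (Finset.card_le_card (fun t ht => rr_one F t (by simpa using ht))).trans (bad_card F)
  have e1 : (∑ t : F, (rr F t : ℤ)) = 2 * ((Finset.univ.filter (fun t : F => rr F t = 2)).card : ℤ)
      + ((Finset.univ.filter (fun t : F => rr F t = 1)).card : ℤ) := by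
    simp only [Finset.card_filter]
    push_cast
    rw [Finset.mul_sum, ← Finset.sum_add_distrib]
    refine Finset.sum_congr rfl fun t _ => ?_
    have := rr_le F t
    interval_cases rr F t <;> simp
  have e2 : (Fintype.card F : ℤ) = ((Finset.univ.filter (fun t : F => rr F t = 2)).card : ℤ)
      + ((Finset.univ.filter (fun t : F => rr F t = 1)).card : ℤ)
      + ((Finset.univ.filter (fun t : F => rr F t = 0)).card : ℤ) := by
    rw [← Finset.card_univ, Finset.card_eq_sum_ones]
    simp only [Finset.card_filter]
    push_cast
    rw [← Finset.sum_add_distrib, ← Finset.sum_add_distrib]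
    refine Finset.sum_congr rfl fun t _ => ?_
    have := rr_le F t
    interval_cases rr F t <;> simp
  rw [sum_rr] at e1
  refine ⟨(Finset.univ.filter (fun t : F => rr F t = 1)).card, by positivity, by exact_mod_cast hD,
    by linarith, by linarith⟩

lemma bad_SL (F : Type) [Field F] [Fintype F] [DecidableEq F] :
    ((Finset.univ.filter (fun A : SL F => A.1.trace ∈ Bad F)).card : ℤ) ≤
      12 * ((Fintype.card F : ℤ)^2 + Fintype.card F) := by
  rw [cardT]
  have h1 : ∑ t ∈ Bad F, (rr F t : ℤ) ≤ ∑ t ∈ Bad F, 2 :=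
    Finset.sum_le_sum fun t _ => by exact_mod_cast rr_le F t
  have h2 : ((Bad F).card : ℤ) ≤ 12 := by exact_mod_cast bad_card F
  simp at h1
  have hq : (0:ℤ) ≤ Fintype.card F := by positivity
  nlinarith [mul_le_mul_of_nonneg_left h1 hq, mul_le_mul_of_nonneg_right h2 (by positivity : (0:ℤ) ≤ (Fintype.card F : ℤ)^2 + Fintype.card F)]

lemma main_SL (F : Type) [Field F] [Fintype F] [DecidableEq F] (P : SL F → Prop) [DecidablePred P]
    (k : ℕ) (hk : k = 2 ∨ k = 0) (h : ∀ A : SL F, A.1.trace ∉ Bad F → (P A ↔ rr F A.1.trace = k)) :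
    |2 * ((Finset.univ.filter P).card : ℤ) - Fintype.card (SL F)| ≤
      36 * ((Fintype.card F : ℤ)^2 + Fintype.card F) := by
  have hb := bad_SL F
  set T := Finset.univ.filter (fun t : F => rr F t = k) with hT
  have hc := cardT F T
  have hr : ∑ t ∈ T, (rr F t : ℤ) = T.card * k := by
    rw [Finset.sum_congr rfl (g := fun _ => (k:ℤ))]
    · simp
    · intro t ht
      simp [hT] at ht
      rw [ht]
  rw [hr] at hc
  have u1 : (Finset.univ.filter P).card ≤ (Finset.univ.filter (fun A : SL F => A.1.trace ∈ T)).card +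
      (Finset.univ.filter (fun A : SL F => A.1.trace ∈ Bad F)).card := by
    refine (Finset.card_le_card ?_).trans (Finset.card_union_le _ _)
    intro A hA
    by_cases hB : A.1.trace ∈ Bad F
    · simp [hB]
    · have := h A hB
      simp at hA
      simp [hT, this.1 hA]
  have u2 : (Finset.univ.filter (fun A : SL F => A.1.trace ∈ T)).card ≤ (Finset.univ.filter P).card +
      (Finset.univ.filter (fun A : SL F => A.1.trace ∈ Bad F)).card := by
    refine (Finset.card_le_card ?_).trans (Finset.card_union_le _ _)
    intro A hA
    by_cases hB : A.1.trace ∈ Bad F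
    · simp [hB]
    · have := h A hB
      simp [hT] at hA
      simp [this.2 hA]
  zify at u1 u2
  rw [card_SL']
  obtain ⟨D, D0, D1, c2, c0⟩ := counts F
  have hq : (0:ℤ) ≤ Fintype.card F := by positivity
  set q : ℤ := (Fintype.card F : ℤ)
  have m1 : 2 * ((Finset.univ.filter (fun A : SL F => A.1.trace ∈ T)).card : ℤ) ≤ q^3 - q +
      12 * (q^2 + q) ∧ q^3 - q - 12 * (q^2 + q) ≤
      2 * ((Finset.univ.filter (fun A : SL F => A.1.trace ∈ T)).card : ℤ) := by
    rw [hc]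
    have v1 : 0 ≤ D * q^2 := by positivity
    have v2 : 0 ≤ D * q := by positivity
    have v3 : D * q^2 ≤ 12 * q^2 := by gcongr
    have v4 : D * q ≤ 12 * q := by gcongr
    have v5 : 0 ≤ q^2 := by positivity
    rcases hk with rfl | rfl
    · have e : 2 * ((T.card : ℤ) * (q^2 - q) + q * (T.card * (2:ℕ))) = (q - 1 - D) * (q^2 + q) := by
        rw [← c2]; push_cast; ring
      rw [e]
      constructor <;> nlinarith
    · have e : 2 * ((T.card : ℤ) * (q^2 - q) + q * (T.card * (0:ℕ))) = (q + 1 - D) * (q^2 - q) := by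
        rw [← c0]; push_cast; ring
      rw [e]
      constructor <;> nlinarith
  rw [abs_le]
  constructor <;> linarith [m1.1, m1.2]

lemma main_PSL (F : Type) [Field F] [Fintype F] [DecidableEq F] (P : PSL2 F → Prop)
    (k : ℕ) (hk : k = 2 ∨ k = 0)
    (h : ∀ A : SL F, A.1.trace ∉ Bad F → (P (QuotientGroup.mk A) ↔ rr F A.1.trace = k)) :
    |(Nat.card {y : PSL2 F // P y} : ℝ) - (Nat.card (PSL2 F) : ℝ) / 2| ≤
            36 * Nat.card (PSL2 F) / Fintype.card F := by
  classical
  have hm := main_SL F (fun A => P (QuotientGroup.mk A)) k hk h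
  have e1 : (Finset.univ.filter (fun A : SL F => P (QuotientGroup.mk A))).card =
      Nat.card (Subgroup.center (SL F)) * Nat.card {y : PSL2 F // P y} := by
    rw [← Fintype.card_subtype, ← Nat.card_eq_fintype_card]
    exact QuotientGroup.card_preimage_mk (Subgroup.center (SL F)) {y | P y}
  have e2 : Fintype.card (SL F) = Nat.card (PSL2 F) * Nat.card (Subgroup.center (SL F)) := by
    rw [← Nat.card_eq_fintype_card]
    exact Subgroup.card_eq_card_quotient_mul_card_subgroup _
  have e3 := card_SL' F
  rw [e1] at hm
  have hz : 0 < Nat.card (Subgroup.center (SL F)) := Nat.card_pos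
  have hq : 2 ≤ Fintype.card F := Fintype.one_lt_card
  rw [e2] at hm e3
  generalize Nat.card (Subgroup.center (SL F)) = z at *
  generalize Nat.card {y : PSL2 F // P y} = n at *
  generalize Nat.card (PSL2 F) = g at *
  generalize Fintype.card F = q at *
  have hm' : |2 * ((z:ℝ) * n) - g * z| ≤ 36 * ((q:ℝ)^2 + q) := by exact_mod_cast hm
  have e3' : (g:ℝ) * z = (q:ℝ)^3 - q := by exact_mod_cast e3
  have hz' : (0:ℝ) < z := by exact_mod_cast hz
  have hq' : (2:ℝ) ≤ q := by exact_mod_cast hq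
  have hb : (q:ℝ) * (q^2 + q) ≤ 2 * (g * z) := by
    rw [e3']; nlinarith [mul_nonneg (mul_nonneg (by linarith : (0:ℝ) ≤ q) (by linarith : (0:ℝ) ≤ q + 1)) (sub_nonneg.2 hq')]
  rw [le_div_iff₀ (by linarith)]
  have e : 2 * ((z:ℝ) * n) - g * z = (2 * z) * (n - g / 2) := by ring
  rw [e, abs_mul, abs_of_pos (by positivity)] at hm'
  have := mul_le_mul_of_nonneg_left hm' (by linarith : (0:ℝ) ≤ q)
  have h2z : (0:ℝ) < 2 * z := by linarith
  refine le_of_mul_le_mul_left ?_ h2z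
  nlinarith

end

theorem stmt_19 :
    ∃ C : ℝ, 0 < C ∧
      ∀ (F : Type) [Field F] [Fintype F],
        -- sign ε = +1 : elements of order > 5 dividing (q - 1)/d
        |(Nat.card {y : PSL2 F // 5 < orderOf y ∧
            orderOf y ∣ (Fintype.card F - 1) / Nat.gcd 2 (Fintype.card F - 1)} : ℝ) -
          (Nat.card (PSL2 F) : ℝ) / 2| ≤
            C * Nat.card (PSL2 F) / Fintype.card F ∧
        -- sign ε = −1 : elements of order > 5 dividing (q + 1)/d
        |(Nat.card {y : PSL2 F // 5 < orderOf y ∧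
            orderOf y ∣ (Fintype.card F + 1) / Nat.gcd 2 (Fintype.card F - 1)} : ℝ) -
          (Nat.card (PSL2 F) : ℝ) / 2| ≤
            C * Nat.card (PSL2 F) / Fintype.card F := by
  classical
  refine ⟨36, by norm_num, ?_⟩
  intro F _ _
  exact ⟨main_PSL F _ 2 (Or.inl rfl) fun A hA => (plus_iff A hA).1,
    main_PSL F _ 0 (Or.inr rfl) fun A hA => (plus_iff A hA).2⟩
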